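/- (Approximate submonoid variant.) Let r ∈ ℕ, let G be an abelian group, and let 𝒜 = (A₁,…,A_q) with A_i = a_i + M_i for each i, where a_i ∈ G and M_i ⊆ G is a K_i-approximate submonoid for some K_i ∈ ℕ. Then for every h = (h₁,…,h_q) ∈ ℕ₀^q there exists a finite set X_h ⊆ G such that (rh)·𝒜 ⊆ X_h + h·𝒜 and |X_h| ≤ ∏_{i : h_i > 0} C((r−1)h_i + K_i − 1, K_i − 1). -/

import Mathlib

open Pointwise BigOperators

/-- The `h`-fold iterated sumset `hA = A + ⋯ + A` (`h` times), with `0A = {0}`. -/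
def hfold {G : Type*} [AddCommMonoid G] : ℕ → Set G → Set G
  | 0, _ => {0}
  | n + 1, A => A + hfold n A

/-- The chromatic sumset `h·𝒜 = h₁A₁ + ⋯ + h_qA_q`. -/
def chromSum {G : Type*} [AddCommMonoid G] {q : ℕ} (h : Fin q → ℕ) (A : Fin q → Set G) :
    Set G :=
  ∑ i, hfold (h i) (A i)

/-!
If `A + A ⊆ F + A`, then trading summands in `A` for summands in `F` one at a time gives
`(m + n)A ⊆ mF + nA` for `n > 0`. Addition being commutative, an element of `mF` is determined by a
multiset of size `m` in `F`, so `|mF|` is at most `C(m + |F| - 1, |F| - 1)` rather than `|F| ^ m`.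
Covers of the summands of a sumset add up, and the numbers of translates multiply. The sets
`Aᵢ = aᵢ + Mᵢ` enter only through `Aᵢ + Aᵢ ⊆ (aᵢ + Fᵢ) + Aᵢ`.
-/

theorem multichoose_le_multichoose_left {k l : ℕ} (n : ℕ) (hkl : k ≤ l) :
    k.multichoose n ≤ l.multichoose n := by
  rw [Nat.multichoose_eq, Nat.multichoose_eq]
  exact Nat.choose_le_choose _ (by lia)

theorem multichoose_eq_choose_pred {k : ℕ} (hk : 0 < k) (n : ℕ) :
    k.multichoose n = (n + k - 1).choose (k - 1) := by
  rw [Nat.multichoose_eq, add_comm k n]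
  exact Nat.choose_symm_of_eq_add (by lia)

theorem prod_multichoose_eq_prod_filter_choose {ι : Type*} (s : Finset ι) {K : ι → ℕ}
    (hK : ∀ i ∈ s, 0 < K i) (r : ℕ) (h : ι → ℕ) :
    ∏ i ∈ s, (K i).multichoose (r * h i) =
      ∏ i ∈ s with 0 < h i, (r * h i + K i - 1).choose (K i - 1) := by
  calc ∏ i ∈ s, (K i).multichoose (r * h i)
      = ∏ i ∈ s with 0 < h i, (K i).multichoose (r * h i) := by
        refine (Finset.prod_filter_of_ne fun i _ hi ↦ Nat.pos_of_ne_zero fun h_zero ↦ hi ?_).symm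
        rw [h_zero, mul_zero, Nat.multichoose_zero_right]
    _ = ∏ i ∈ s with 0 < h i, (r * h i + K i - 1).choose (K i - 1) :=
        Finset.prod_congr rfl fun i hi ↦
          multichoose_eq_choose_pred (hK i (Finset.filter_subset _ _ hi)) _

section AddMonoid

variable {G : Type*} [AddMonoid G] {A B : Set G}

theorem covByVAdd_natCast_iff {n : ℕ} :
    CovByVAdd G (n : ℝ) A B ↔ ∃ X : Finset G, X.card ≤ n ∧ A ⊆ ↑X + B := by
  simp only [CovByVAdd, Nat.cast_le, vadd_eq_add]

theorem add_nsmul_subset_nsmul_add_nsmul {F : Set G} (hA : A + A ⊆ F + A) (m : ℕ) {n : ℕ}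
    (hn : n ≠ 0) : (m + n) • A ⊆ m • F + n • A := by
  obtain ⟨k, rfl⟩ := Nat.exists_eq_succ_of_ne_zero hn
  calc (m + (k + 1)) • A = (m + 1) • A + k • A := by rw [← add_nsmul, add_right_comm, add_assoc]
    _ ⊆ (m • F + A) + k • A := by
        gcongr
        exact Set.nsmul_subset_nsmul_add_of_sq_subset_add (by rwa [two_nsmul]) m.succ_ne_zero
    _ = m • F + (k + 1) • A := by rw [add_assoc, ← succ_nsmul']

end AddMonoid

section AddCommMonoid

variable {G : Type*} [AddCommMonoid G] {A B C D : Set G}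

theorem hfold_eq_nsmul (n : ℕ) (A : Set G) : hfold n A = n • A := by
  induction n with
  | zero => rw [hfold, zero_nsmul, Set.singleton_zero]
  | succ n ih => rw [hfold, ih, succ_nsmul']

theorem card_nsmul_le_multichoose [DecidableEq G] (F : Finset G) (n : ℕ) :
    (n • F).card ≤ F.card.multichoose n := by
  let sumOf (m : Sym F n) : G := ((m : Multiset F).map (↑)).sum
  have nsmul_subset_image : n • F ⊆ Finset.univ.image sumOf := by
    intro x hx
    obtain ⟨f, rfl⟩ := Finset.mem_nsmul.1 hx
    refine Finset.mem_image.2 ⟨⟨(List.ofFn f : Multiset F), by simp⟩, Finset.mem_univ _, ?_⟩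
    simp [sumOf, Function.comp_def]
  calc (n • F).card ≤ (Finset.univ.image sumOf).card := Finset.card_le_card nsmul_subset_image
    _ ≤ Fintype.card (Sym F n) := Finset.card_image_le
    _ = F.card.multichoose n := by rw [Sym.card_sym_eq_multichoose, Fintype.card_coe]

theorem covByVAdd_add {K L : ℝ} (hAB : CovByVAdd G K A B) (hCD : CovByVAdd G L C D) :
    CovByVAdd G (K * L) (A + C) (B + D) := by
  classical
  have K_nonneg := hAB.nonneg
  obtain ⟨X, hX, hAX⟩ := hAB
  obtain ⟨Y, hY, hCY⟩ := hCD
  refine ⟨X + Y, ?_, ?_⟩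
  · calc ((X + Y).card : ℝ) ≤ X.card * Y.card := mod_cast Finset.card_add_le
      _ ≤ K * L := by gcongr
  · rw [vadd_eq_add] at hAX hCY ⊢
    calc A + C ⊆ (↑X + B) + (↑Y + D) := Set.add_subset_add hAX hCY
      _ = ↑(X + Y) + (B + D) := by rw [add_add_add_comm, Finset.coe_add]

theorem covByVAdd_sum {ι : Type*} (s : Finset ι) {K : ι → ℝ} {A B : ι → Set G}
    (hAB : ∀ i ∈ s, CovByVAdd G (K i) (A i) (B i)) :
    CovByVAdd G (∏ i ∈ s, K i) (∑ i ∈ s, A i) (∑ i ∈ s, B i) := by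
  induction s using Finset.cons_induction with
  | empty => simp only [Finset.prod_empty, Finset.sum_empty, CovByVAdd.rfl]
  | cons i s hi ih =>
    rw [Finset.forall_mem_cons] at hAB
    simpa only [Finset.prod_cons, Finset.sum_cons] using covByVAdd_add hAB.1 (ih hAB.2)

theorem covByVAdd_add_self_singleton_add {K : ℝ} (a : G) (hA : CovByVAdd G K (A + A) A) :
    CovByVAdd G K (({a} + A) + ({a} + A)) ({a} + A) := by
  have singleton_cov : CovByVAdd G 1 ({a} + {a} : Set G) {a} := ⟨{a}, by simp⟩
  simpa only [one_mul, add_add_add_comm] using covByVAdd_add singleton_cov hA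

theorem covByVAdd_add_nsmul {K : ℕ} (hA : CovByVAdd G (K : ℝ) (A + A) A) (m : ℕ) {n : ℕ}
    (hn : n ≠ 0) : CovByVAdd G (K.multichoose m : ℝ) ((m + n) • A) (n • A) := by
  classical
  obtain ⟨F, hFK, hF⟩ := covByVAdd_natCast_iff.1 hA
  refine covByVAdd_natCast_iff.2 ⟨m • F, ?_, ?_⟩
  · exact (card_nsmul_le_multichoose F m).trans (multichoose_le_multichoose_left m hFK)
  · rw [Finset.coe_nsmul]
    exact add_nsmul_subset_nsmul_add_nsmul hF m hn

theorem covByVAdd_mul_nsmul {K : ℕ} (hA : CovByVAdd G (K : ℝ) (A + A) A) {r : ℕ} (hr : 0 < r)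
    (h : ℕ) : CovByVAdd G (K.multichoose ((r - 1) * h) : ℝ) ((r * h) • A) (h • A) := by
  obtain rfl | h_ne_zero := eq_or_ne h 0
  · simp only [mul_zero, Nat.multichoose_zero_right, Nat.cast_one, CovByVAdd.rfl]
  · have r_mul : r * h = (r - 1) * h + h := by
      rw [← Nat.succ_mul, Nat.succ_eq_add_one, Nat.sub_add_cancel hr]
    rw [r_mul]
    exact covByVAdd_add_nsmul hA _ h_ne_zero

end AddCommMonoid

theorem stmt9_general {G : Type*} [AddCommMonoid G] {q : ℕ} (r : ℕ) (hr : 0 < r)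
    (K : Fin q → ℕ) (A : Fin q → Set G) (hA : ∀ i, CovByVAdd G (K i : ℝ) (A i + A i) (A i))
    (h : Fin q → ℕ) :
    CovByVAdd G ((∏ i, (K i).multichoose ((r - 1) * h i) : ℕ) : ℝ)
      (chromSum (fun i => r * h i) A) (chromSum h A) := by
  simp only [chromSum, hfold_eq_nsmul, Nat.cast_prod]
  exact covByVAdd_sum _ fun i _ ↦ covByVAdd_mul_nsmul (hA i) hr (h i)

/-- Approximate submonoid variant: if `Aᵢ = aᵢ + Mᵢ` with `Mᵢ` a `Kᵢ`-approximate
submonoid, then for every `h` there is a finite `X_h` with `(rh)·𝒜 ⊆ X_h + h·𝒜` and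
`|X_h| ≤ ∏_{i : hᵢ>0} C((r−1)hᵢ + Kᵢ − 1, Kᵢ − 1)`. -/
theorem stmt9 {G : Type*} [AddCommGroup G] {q : ℕ} (r : ℕ) (hr : 0 < r)
    (a : Fin q → G) (M : Fin q → Set G) (K : Fin q → ℕ) (hK : ∀ i, 0 < K i)
    (hM0 : ∀ i, (0 : G) ∈ M i)
    (happrox : ∀ i, ∃ F : Finset G, F.card ≤ K i ∧ M i + M i ⊆ ↑F + M i)
    (A : Fin q → Set G) (hA : ∀ i, A i = {a i} + M i) (h : Fin q → ℕ) :
    ∃ X : Finset G,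
      X.card ≤ ∏ i ∈ Finset.univ.filter (fun i => 0 < h i),
        ((r - 1) * h i + K i - 1).choose (K i - 1) ∧
      chromSum (fun i => r * h i) A ⊆ ↑X + chromSum h A := by
  rw [← prod_multichoose_eq_prod_filter_choose Finset.univ (fun i _ ↦ hK i)]
  exact covByVAdd_natCast_iff.1 (stmt9_general r hr K A
    (fun i ↦ hA i ▸ covByVAdd_add_self_singleton_add (a i) (covByVAdd_natCast_iff.2 (happrox i))) h)
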